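/- Let L be a nonempty set, M a set, ⊨ ⊆ M × L a binary relation, and let f : 2^M → 2^M satisfy Contraction, Coherence and Local Monotonicity. Define > on 2^M by: X > Y iff f(X) ≠ ∅ and Y ∩ f(X ∪ Y) = ∅, and define C : 2^L → 2^L by C(A) = Th(f(Mod(A))). Then for all A ⊆ L and a ∈ L: a ∈ C(A) iff either Mod(A) ∩ Mod({a}) > Mod(A) \ Mod({a}), or not Mod(A) > ∅. -/

import Mathlib

/-- Mod(A): the set of models satisfying every formula in A. -/
def ModSet {M L : Type} (sat : M → L → Prop) (A : Set L) : Set M :=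
  {x | ∀ a ∈ A, sat x a}

/-- Th(X): the set of formulas satisfied in every model of X. -/
def ThSet {M L : Type} (sat : M → L → Prop) (X : Set M) : Set L :=
  {a | ∀ x ∈ X, sat x a}

/-!
Fix sets of models `X` and `T` and let `f` satisfy Contraction and Coherence. Since `X ∩ T` and
`X \ T` cover `X`, the relation `X ∩ T > X \ T` says that `f X` avoids `X \ T`, that is
`f X ⊆ T`, and that `f (X ∩ T)` is nonempty. The second condition is automatic as soon as
`f X ⊆ T` and `f X` is nonempty, because Coherence then gives `f X ⊆ f (X ∩ T)`; if `f X` is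
empty, then `f X ⊆ T` holds trivially, and this is the case `¬ X > ∅`. Taking `X = Mod(A)` and
`T = Mod({a})`, the inclusion `f X ⊆ T` means `a ∈ Th(f(Mod(A)))`.
-/

section ChoiceFunction

variable {α : Type*} {f : Set α → Set α} {X Y T : Set α}

/-- The relation `X > Y` that a choice function `f` induces on sets: something is chosen from `X`,
and nothing chosen from `X ∪ Y` lies in `Y`. -/
def ChoiceGT (f : Set α → Set α) (X Y : Set α) : Prop :=
  f X ≠ ∅ ∧ Y ∩ f (X ∪ Y) = ∅

theorem choiceGT_empty_right : ChoiceGT f X ∅ ↔ f X ≠ ∅ := by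
  simp [ChoiceGT]

theorem choiceGT_inter_sdiff_iff (hContr : f X ⊆ X) :
    ChoiceGT f (X ∩ T) (X \ T) ↔ f (X ∩ T) ≠ ∅ ∧ f X ⊆ T := by
  have avoids_iff : (X \ T) ∩ f X = ∅ ↔ f X ⊆ T := by
    rw [Set.sdiff_inter_right_comm, Set.inter_eq_right.mpr hContr, Set.sdiff_eq_empty]
  rw [ChoiceGT, Set.inter_union_sdiff, avoids_iff]

theorem choice_subset_choice_of_subset (hCoh : ∀ X Y : Set α, X ⊆ Y → X ∩ f Y ⊆ f X)
    (hYX : Y ⊆ X) (hfX : f X ⊆ Y) : f X ⊆ f Y :=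
  (Set.subset_inter hfX subset_rfl).trans (hCoh Y X hYX)

theorem choice_subset_iff_choiceGT (hContr : ∀ X : Set α, f X ⊆ X)
    (hCoh : ∀ X Y : Set α, X ⊆ Y → X ∩ f Y ⊆ f X) :
    f X ⊆ T ↔ ChoiceGT f (X ∩ T) (X \ T) ∨ ¬ ChoiceGT f X ∅ := by
  rw [choiceGT_inter_sdiff_iff (hContr X), choiceGT_empty_right, not_not]
  constructor
  · intro hT
    rcases (f X).eq_empty_or_nonempty with hempty | hne
    · exact .inr hempty
    · have hsub : f X ⊆ f (X ∩ T) :=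
        choice_subset_choice_of_subset hCoh Set.inter_subset_left
          (Set.subset_inter (hContr X) hT)
      exact .inl ⟨(hne.mono hsub).ne_empty, hT⟩
  · rintro (⟨-, hT⟩ | hempty)
    · exact hT
    · exact hempty ▸ Set.empty_subset T

end ChoiceFunction

section Satisfaction

variable {L M : Type} {sat : M → L → Prop}

theorem subset_thSet_iff_subset_modSet {A : Set L} {X : Set M} :
    A ⊆ ThSet sat X ↔ X ⊆ ModSet sat A :=
  ⟨fun h _ hx _ ha => h ha _ hx, fun h _ ha _ hx => h hx _ ha⟩

theorem mem_thSet_iff_subset_modSet {a : L} {X : Set M} :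
    a ∈ ThSet sat X ↔ X ⊆ ModSet sat {a} := by
  rw [← Set.singleton_subset_iff, subset_thSet_iff_subset_modSet]

theorem stmt_4_general (f : Set M → Set M)
    (hContr : ∀ X : Set M, f X ⊆ X)
    (hCoh : ∀ X Y : Set M, X ⊆ Y → X ∩ f Y ⊆ f X)
    (gt : Set M → Set M → Prop)
    (hgt : ∀ X Y : Set M, gt X Y ↔ f X ≠ ∅ ∧ Y ∩ f (X ∪ Y) = ∅)
    (C : Set L → Set L)
    (hC : ∀ A : Set L, C A = ThSet sat (f (ModSet sat A))) (A : Set L) (a : L) :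
    a ∈ C A ↔
      (gt (ModSet sat A ∩ ModSet sat {a}) (ModSet sat A \ ModSet sat {a}) ∨
       ¬ gt (ModSet sat A) ∅) := by
  have gt_iff (X Y : Set M) : gt X Y ↔ ChoiceGT f X Y := hgt X Y
  rw [hC, mem_thSet_iff_subset_modSet, gt_iff, gt_iff]
  exact choice_subset_iff_choiceGT hContr hCoh

end Satisfaction

/-- The operation defined by a choice function satisfies the qualitative-measure
definition through the induced relation. -/
theorem stmt_4 {L M : Type} [Nonempty L] (sat : M → L → Prop)
    (f : Set M → Set M)
    (hContr : ∀ X : Set M, f X ⊆ X)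
    (hCoh : ∀ X Y : Set M, X ⊆ Y → X ∩ f Y ⊆ f X)
    (hLM : ∀ X Y : Set M, f X ⊆ Y → Y ⊆ X → f Y ⊆ f X)
    (gt : Set M → Set M → Prop)
    (hgt : ∀ X Y : Set M, gt X Y ↔ f X ≠ ∅ ∧ Y ∩ f (X ∪ Y) = ∅)
    (C : Set L → Set L)
    (hC : ∀ A : Set L, C A = ThSet sat (f (ModSet sat A))) :
    ∀ (A : Set L) (a : L),
      a ∈ C A ↔
        (gt (ModSet sat A ∩ ModSet sat {a}) (ModSet sat A \ ModSet sat {a}) ∨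
         ¬ gt (ModSet sat A) ∅) := by
  exact stmt_4_general f hContr hCoh gt hgt C hC
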